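/- Let A = (a_ij) be an n×n dual quaternion Hermitian matrix, α a dual quaternion, and P_{i;α} a multiplication matrix. Then Cdet(P_{n;α} A) = α Cdet(A), Cdet(A P_{n;α}) = α Cdet(A), and Cdet(P_{i;α}* A P_{i;α}) = α*α Cdet(A) for all i = 1,…,n. -/

import Mathlib

/-!
All three identities are cases of `Cdet_scale`: row `i` of a Hermitian matrix is multiplied by `s`
on the left and column `i` by `d` on the right, and the Chen determinant is multiplied by `s * d`
(with `(s, d) = (α, 1)`, `(1, α)` and `(α*, α)`).

Write the summand of a permutation `σ` as a product of cycle products, and let `x` be the product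
of the cycle containing `i`. Inverting that cycle (`flipCycle`) is an involution on permutations
which keeps the leaders, the sign and all other cycle products, and replaces `x` by its conjugate,
because `A` is Hermitian (`cycProd_flipCycle_of_mem`). Hence in the sum of the two summands `x`
is replaced by `x + x*`, which is a dual number and so central (`dq_add_star_central`).

After scaling (`cycProd_scale`), `x` becomes `s * x * d` if `i` leads its cycle, and is multiplied
by `d * s` in the interior otherwise. In the first case centrality of `x + x*` turns the scalars
into `s * d`. This scalar then moves to the far left: for the last index its cycle is the first
one, so nothing is in the way, and for `(α*, α)` the scalar `α* * α = α * α*` is a dual number.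
Summing over all `σ` counts every summand twice, so dividing by two gives the claim.
-/


/-!
Formalization background for "Moore Determinant of Dual Quaternion Hermitian Matrices"
(Cui, Qi, Song, Wang).

A dual quaternion is `q = q_s + q_d ε` with `q_s, q_d` quaternions, `ε² = 0`; it is modeled
by `DualNumber (Quaternion ℝ)`.
-/

open Quaternion Matrix

noncomputable section

/-- Dual quaternions: dual numbers over the quaternions. -/
abbrev DualQuaternion : Type := DualNumber (Quaternion ℝ)

namespace DQPaper

/-- Conjugation of dual quaternions: `(q_s + q_d ε)* = q_s* + q_d* ε`. -/
instance : Star DualQuaternion := ⟨fun q => (star q.fst, star q.snd)⟩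

/-- The real part of a dual quaternion `q = q_s + q_d ε`, as the dual number
`Re(q_s) + Re(q_d) ε`. -/
def dqRe (q : DualQuaternion) : DualNumber ℝ := (q.fst.re, q.snd.re)

/-- The embedding of the dual numbers into the dual quaternions. -/
def toDQ (d : DualNumber ℝ) : DualQuaternion := ((d.fst : ℍ[ℝ]), (d.snd : ℍ[ℝ]))

/-- A dual quaternion is a dual number if its standard and dual parts are both real. -/
def IsDualNum (q : DualQuaternion) : Prop := ∃ d : DualNumber ℝ, q = toDQ d

/-- A dual number `a + b ε` is nonnegative if `a > 0`, or `a = 0` and `b ≥ 0`. -/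
def DNNonneg (u : DualNumber ℝ) : Prop := 0 < u.fst ∨ (u.fst = 0 ∧ 0 ≤ u.snd)

/-- The order on dual numbers: `u ≤ v` iff `v - u` is nonnegative. -/
def dnLe (u v : DualNumber ℝ) : Prop := DNNonneg (v - u)

open Classical in
/-- The magnitude of a dual quaternion `p = p_s + p_d ε`, as a dual number:
`|p| = |p_s| + ((p_s* p_d + p_d* p_s)/(2|p_s|)) ε` if `p_s ≠ 0`, and `|p| = |p_d| ε`
otherwise. -/
def dqMag (p : DualQuaternion) : DualNumber ℝ :=
  if p.fst = 0 then (0, ‖p.snd‖)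
  else (‖p.fst‖, ((star p.fst * p.snd + star p.snd * p.fst).re) / (2 * ‖p.fst‖))

/-- The cycle of the permutation `σ` containing `i`, listed as `[i, σ i, σ² i, …]`. -/
def cycleList {n : ℕ} (σ : Equiv.Perm (Fin n)) (i : Fin n) : List (Fin n) :=
  i :: (((List.range n).map (fun k => (σ ^ (k + 1)) i)).takeWhile (fun j => decide (j ≠ i)))

/-- The leaders (largest element of each cycle) of `σ`, listed in decreasing order;
this is the normalization used in the Chen determinant. -/
def chenLeaders {n : ℕ} (σ : Equiv.Perm (Fin n)) : List (Fin n) :=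
  ((List.finRange n).filter (fun i => (cycleList σ i).all (fun j => decide (j ≤ i)))).reverse

/-- All of `Fin n` listed in the normalized cycle order of the Chen determinant:
each cycle is led by its largest element, and cycles are ordered by decreasing leaders
(so the first cycle contains the last index). -/
def chenOrder {n : ℕ} (σ : Equiv.Perm (Fin n)) : List (Fin n) :=
  ((chenLeaders σ).map (cycleList σ)).flatten

/-- The Chen determinant of a square matrix over a (possibly noncommutative) ring:
`Cdet A = Σ_σ (−1)^{n−r} a_σ`, where `σ` runs over all permutations written in the
normalized cycle form with `r` disjoint cycles, and `a_σ` is the ordered product of the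
entries `A i (σ i)` along the normalized cycle order. -/
def Cdet {n : ℕ} {R : Type*} [Ring R] (A : Matrix (Fin n) (Fin n) R) : R :=
  ∑ σ : Equiv.Perm (Fin n),
    (-1 : R) ^ (n - (chenLeaders σ).length) * ((chenOrder σ).map (fun i => A i (σ i))).prod

/-- The leaders (smallest element of each cycle) of `σ`, listed in decreasing order;
this is the normalization used in the Moore determinant. -/
def mooreLeaders {n : ℕ} (σ : Equiv.Perm (Fin n)) : List (Fin n) :=
  ((List.finRange n).filter (fun i => (cycleList σ i).all (fun j => decide (i ≤ j)))).reverse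

/-- All of `Fin n` listed in the normalized cycle order of the Moore determinant:
each cycle is led by its smallest element, and cycles are ordered by decreasing leaders. -/
def mooreOrder {n : ℕ} (σ : Equiv.Perm (Fin n)) : List (Fin n) :=
  ((mooreLeaders σ).map (cycleList σ)).flatten

/-- The Moore determinant of a square matrix over a (possibly noncommutative) ring:
`Mdet A = Σ_σ s(σ) a_σ`, where `s(σ)` is the sign of `σ` and `a_σ` is the ordered product
of the entries `A i (σ i)` along the normalized (Moore) cycle order. -/
def Mdet {n : ℕ} {R : Type*} [Ring R] (A : Matrix (Fin n) (Fin n) R) : R :=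
  ∑ σ : Equiv.Perm (Fin n),
    ((Equiv.Perm.sign σ : ℤ) : R) * ((mooreOrder σ).map (fun i => A i (σ i))).prod

/-- The switching matrix `P_{ij}`: the identity matrix with rows `i` and `j` interchanged. -/
def switchMatrix {R : Type*} [Ring R] {n : ℕ} (i j : Fin n) : Matrix (Fin n) (Fin n) R :=
  Matrix.of fun k l =>
    if (k = i ∧ l = j) ∨ (k = j ∧ l = i) ∨ (k = l ∧ k ≠ i ∧ k ≠ j) then 1 else 0

/-- The multiplication matrix `P_{i;c}`: the identity matrix with the `(i,i)` entry
replaced by `c`. -/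
def mulMatrix {R : Type*} [Ring R] {n : ℕ} (i : Fin n) (c : R) : Matrix (Fin n) (Fin n) R :=
  Matrix.of fun k l => if k = l then (if k = i then c else 1) else 0

/-- The addition matrix `P_{ij;c}`: the identity matrix with an extra entry `c` in
position `(j,i)`, so that `P_{ij;c} * A` adds `c` times row `i` of `A` to row `j`. -/
def addMatrix {R : Type*} [Ring R] {n : ℕ} (i j : Fin n) (c : R) : Matrix (Fin n) (Fin n) R :=
  Matrix.of fun k l => (if k = l then 1 else 0) + (if k = j ∧ l = i then c else 0)

/-- The product `A i₁ i₂ * A i₂ i₃ * ⋯ * A i_{m-1} i_m` of matrix entries along a chain of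
indices `[i₁, …, i_m]`; applied to a closed chain `[i₁, …, i_m, i₁]` it gives the cycle
product `⟨i₁ … i_m i₁⟩ = a_{i₁ i₂} ⋯ a_{i_m i₁}`. -/
def chainProd {n : ℕ} (A : Matrix (Fin n) (Fin n) DualQuaternion) :
    List (Fin n) → DualQuaternion
  | [] => 1
  | [_] => 1
  | i :: j :: rest => A i j * chainProd A (j :: rest)

/-- A dual number `lam` is a (right) eigenvalue of the dual quaternion matrix `A` if
`A x = x lam` for some appreciable dual quaternion vector `x` (i.e. one whose standard
part is nonzero). -/
def IsEigenvalue {n : ℕ} (A : Matrix (Fin n) (Fin n) DualQuaternion)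
    (lam : DualNumber ℝ) : Prop :=
  ∃ x : Fin n → DualQuaternion,
    (fun i => (x i).fst) ≠ 0 ∧ A.mulVec x = fun i => x i * toDQ lam

/-- The dual quaternion Hermitian matrix `A` has the dual numbers `lam 1, …, lam n` as its
eigenvalues (counted with multiplicity), via the unitary diagonalization `U A U* = diag(lam)`
of Qi and Luo (2023). -/
def HasEigenvalues {n : ℕ} (A : Matrix (Fin n) (Fin n) DualQuaternion)
    (lam : Fin n → DualNumber ℝ) : Prop :=
  ∃ U : Matrix (Fin n) (Fin n) DualQuaternion,
    Uᴴ * U = 1 ∧ U * A * Uᴴ = Matrix.diagonal fun i => toDQ (lam i)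

/-! ### Cycle lists -/

/-- If `m` is the minimal period of `i` under `σ`, then `cycleList σ i` is
`[i, σ i, …, σ ^ (m - 1) i]`. -/
lemma cycleList_eq {n : ℕ} {σ : Equiv.Perm (Fin n)} {i : Fin n} {m : ℕ} (hm : 0 < m)
    (hmn : m ≤ n) (hper : (σ ^ m) i = i) (hmin : ∀ k, 0 < k → k < m → (σ ^ k) i ≠ i) :
    cycleList σ i = (List.range m).map (fun k => (σ ^ k) i) := by
  obtain ⟨m, rfl⟩ : ∃ m', m = m' + 1 := ⟨m - 1, by omega⟩
  obtain ⟨r, rfl⟩ : ∃ r, n = m + (r + 1) := ⟨n - m - 1, by omega⟩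
  unfold cycleList
  rw [List.range_succ_eq_map, List.range_add, List.map_append, List.takeWhile_append_of_pos]
  · rw [List.range_succ_eq_map]
    simp [hper, Function.comp_def]
  · intro a ha
    simp only [List.mem_map, List.mem_range] at ha
    obtain ⟨k, hk, rfl⟩ := ha
    simpa using hmin (k + 1) (by omega) (by omega)

lemma exists_period {n : ℕ} (σ : Equiv.Perm (Fin n)) (i : Fin n) :
    ∃ m, 0 < m ∧ m ≤ n ∧ (σ ^ m) i = i ∧ ∀ k, 0 < k → k < m → (σ ^ k) i ≠ i := by
  refine ⟨Function.minimalPeriod σ i, ?_, ?_, ?_, ?_⟩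
  · apply Function.IsPeriodicPt.minimalPeriod_pos (orderOf_pos σ)
    rw [Function.IsPeriodicPt, Equiv.Perm.iterate_eq_pow, pow_orderOf_eq_one]
    rfl
  · simpa using Function.minimalPeriod_le_card (f := σ) (x := i)
  · rw [← Equiv.Perm.iterate_eq_pow]
    exact Function.iterate_minimalPeriod
  · intro k hk hkm h
    rw [← Equiv.Perm.iterate_eq_pow] at h
    exact Function.not_isPeriodicPt_of_pos_of_lt_minimalPeriod hk.ne' hkm h

lemma mem_cycleList {n : ℕ} {σ : Equiv.Perm (Fin n)} {i j : Fin n} :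
    j ∈ cycleList σ i ↔ σ.SameCycle i j := by
  obtain ⟨m, hm, hmn, hper, hmin⟩ := exists_period σ i
  rw [cycleList_eq hm hmn hper hmin]
  simp only [List.mem_map, List.mem_range]
  constructor
  · rintro ⟨k, -, rfl⟩
    exact ⟨k, by simp⟩
  · intro h
    obtain ⟨k, -, rfl⟩ := h.exists_pow_eq'
    refine ⟨k % m, Nat.mod_lt _ hm, ?_⟩
    have hp : Function.IsPeriodicPt σ m i := by
      rw [Function.IsPeriodicPt, Equiv.Perm.iterate_eq_pow]; exact hper
    rw [← Equiv.Perm.iterate_eq_pow, ← Equiv.Perm.iterate_eq_pow]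
    exact hp.iterate_mod_apply k

lemma mem_chenLeaders {n : ℕ} {σ : Equiv.Perm (Fin n)} {l : Fin n} :
    l ∈ chenLeaders σ ↔ ∀ j, σ.SameCycle l j → j ≤ l := by
  simp [chenLeaders, mem_cycleList]

lemma chenLeaders_nodup {n : ℕ} (σ : Equiv.Perm (Fin n)) : (chenLeaders σ).Nodup := by
  rw [chenLeaders, List.nodup_reverse]
  exact (List.nodup_finRange n).filter _

lemma chenLeaders_eq_last_cons {n : ℕ} (σ : Equiv.Perm (Fin (n + 1))) :
    ∃ L, chenLeaders σ = Fin.last n :: L := by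
  rw [chenLeaders, List.finRange_succ_last, List.filter_append, List.reverse_append,
    List.filter_cons_of_pos (by simp [Fin.le_last])]
  exact ⟨_, rfl⟩

lemma exists_leader {n : ℕ} (σ : Equiv.Perm (Fin n)) (i : Fin n) :
    ∃ l ∈ chenLeaders σ, σ.SameCycle i l := by
  classical
  obtain ⟨l, hl, hmax⟩ := Finset.exists_max_image (Finset.univ.filter (fun j => σ.SameCycle i j))
    id ⟨i, by simpa using Equiv.Perm.SameCycle.refl σ i⟩
  simp only [Finset.mem_filter, Finset.mem_univ, true_and, id] at hl hmax
  exact ⟨l, mem_chenLeaders.2 fun j hj => hmax j (hl.trans hj), hl⟩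

/-! ### Inverting one cycle of a permutation -/

open Classical in
/-- The permutation obtained from `σ` by inverting the cycle through `i` and keeping all other
cycles. -/
def flipCycle {n : ℕ} (i : Fin n) (σ : Equiv.Perm (Fin n)) : Equiv.Perm (Fin n) where
  toFun j := if σ.SameCycle i j then σ⁻¹ j else σ j
  invFun j := if σ.SameCycle i j then σ j else σ⁻¹ j
  left_inv j := by
    by_cases h : σ.SameCycle i j <;>
      simp [h, Equiv.Perm.sameCycle_symm_apply_right, Equiv.Perm.sameCycle_apply_right]
  right_inv j := by
    by_cases h : σ.SameCycle i j <;>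
      simp [h, Equiv.Perm.sameCycle_symm_apply_right, Equiv.Perm.sameCycle_apply_right]

lemma flipCycle_apply_of_mem {n : ℕ} {i j : Fin n} {σ : Equiv.Perm (Fin n)}
    (h : σ.SameCycle i j) : flipCycle i σ j = σ⁻¹ j := if_pos h

lemma flipCycle_apply_of_not_mem {n : ℕ} {i j : Fin n} {σ : Equiv.Perm (Fin n)}
    (h : ¬ σ.SameCycle i j) : flipCycle i σ j = σ j := if_neg h

lemma flipCycle_pow_of_mem {n : ℕ} {i j : Fin n} {σ : Equiv.Perm (Fin n)}
    (h : σ.SameCycle i j) (k : ℕ) : (flipCycle i σ ^ k) j = (σ⁻¹ ^ k) j := by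
  induction k with
  | zero => rfl
  | succ k ih =>
    have h' : σ.SameCycle i ((σ⁻¹ ^ k) j) := by
      refine h.trans ⟨-k, by simp⟩
    rw [pow_succ', pow_succ', Equiv.Perm.mul_apply, Equiv.Perm.mul_apply, ih,
      flipCycle_apply_of_mem h']

lemma flipCycle_pow_of_not_mem {n : ℕ} {i j : Fin n} {σ : Equiv.Perm (Fin n)}
    (h : ¬ σ.SameCycle i j) (k : ℕ) : (flipCycle i σ ^ k) j = (σ ^ k) j := by
  induction k with
  | zero => rfl
  | succ k ih =>
    have h' : ¬ σ.SameCycle i ((σ ^ k) j) := by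
      rwa [Equiv.Perm.sameCycle_pow_right]
    rw [pow_succ', pow_succ', Equiv.Perm.mul_apply, Equiv.Perm.mul_apply, ih,
      flipCycle_apply_of_not_mem h']

lemma cycleList_congr {n : ℕ} {i : Fin n} {σ τ : Equiv.Perm (Fin n)}
    (h : ∀ k : ℕ, (σ ^ k) i = (τ ^ k) i) : cycleList σ i = cycleList τ i := by
  simp [cycleList, h]

lemma flipCycle_sameCycle {n : ℕ} {i a b : Fin n} {σ : Equiv.Perm (Fin n)} :
    (flipCycle i σ).SameCycle a b ↔ σ.SameCycle a b := by
  rw [← mem_cycleList]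
  by_cases h : σ.SameCycle i a
  · rw [cycleList_congr (flipCycle_pow_of_mem h), mem_cycleList, Equiv.Perm.sameCycle_inv]
  · rw [cycleList_congr (flipCycle_pow_of_not_mem h), mem_cycleList]

lemma flipCycle_involutive {n : ℕ} (i : Fin n) : Function.Involutive (flipCycle i) := by
  intro σ
  ext1 j
  by_cases h : σ.SameCycle i j
  · rw [flipCycle_apply_of_mem (flipCycle_sameCycle.2 h), Equiv.Perm.inv_eq_iff_eq,
      flipCycle_apply_of_mem]
    · simp
    · rwa [Equiv.Perm.sameCycle_apply_right]
  · rw [flipCycle_apply_of_not_mem (mt flipCycle_sameCycle.1 h), flipCycle_apply_of_not_mem h]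

lemma chenLeaders_flipCycle {n : ℕ} (i : Fin n) (σ : Equiv.Perm (Fin n)) :
    chenLeaders (flipCycle i σ) = chenLeaders σ := by
  unfold chenLeaders
  congr 1
  apply List.filter_congr
  intro l _
  rw [Bool.eq_iff_iff]
  simp [mem_cycleList, flipCycle_sameCycle]

/-! ### Cycle products -/

/-- The product of the entries of `A` along the cycle of `σ` through `l`, started at `l`. -/
def cycProd {n : ℕ} {R : Type*} [Ring R] (A : Matrix (Fin n) (Fin n) R)
    (σ : Equiv.Perm (Fin n)) (l : Fin n) : R :=
  ((cycleList σ l).map (fun j => A j (σ j))).prod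

/-- The signed summand of the Chen determinant belonging to `σ`. -/
def chenTerm {n : ℕ} {R : Type*} [Ring R] (A : Matrix (Fin n) (Fin n) R)
    (σ : Equiv.Perm (Fin n)) : R :=
  (-1 : R) ^ (n - (chenLeaders σ).length) * ((chenLeaders σ).map (cycProd A σ)).prod

lemma Cdet_eq_sum_chenTerm {n : ℕ} {R : Type*} [Ring R] (A : Matrix (Fin n) (Fin n) R) :
    Cdet A = ∑ σ, chenTerm A σ := by
  unfold Cdet chenTerm chenOrder cycProd
  simp [List.map_flatten, List.prod_flatten, Function.comp_def]

lemma cycProd_congr {n : ℕ} {R : Type*} [Ring R] {A B : Matrix (Fin n) (Fin n) R}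
    {σ : Equiv.Perm (Fin n)} {l : Fin n}
    (h : ∀ j, σ.SameCycle l j → B j (σ j) = A j (σ j)) : cycProd B σ l = cycProd A σ l := by
  unfold cycProd
  rw [List.map_congr_left fun j hj => h j (mem_cycleList.1 hj)]

lemma cycProd_flipCycle_of_not_mem {n : ℕ} {R : Type*} [Ring R] (A : Matrix (Fin n) (Fin n) R)
    {σ : Equiv.Perm (Fin n)} {i l : Fin n} (h : ¬ σ.SameCycle i l) :
    cycProd A (flipCycle i σ) l = cycProd A σ l := by
  unfold cycProd
  rw [cycleList_congr (flipCycle_pow_of_not_mem h)]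
  congr 1
  apply List.map_congr_left
  intro j hj
  rw [flipCycle_apply_of_not_mem fun h' => h (h'.trans (mem_cycleList.1 hj).symm)]

/-- If every entry is replaced by `s j * A j k * d k`, the inner factors of a product along the
path `f 0, f 1, …, f m` meet in pairs `d (f k) * s (f k)`, which `e` collects. -/
lemma prod_path {n : ℕ} {R : Type*} [Ring R] (A : Matrix (Fin n) (Fin n) R)
    (s d : Fin n → R) (f : ℕ → Fin n) (e : ℕ → R) (he : ∀ k r, e k * r = r * e k)
    (h1 : e 1 = 1) (m : ℕ)
    (hstep : ∀ k, 1 ≤ k → k ≤ m → e (k + 1) = e k * (d (f k) * s (f k))) :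
    ((List.range (m + 1)).map
        (fun k => s (f k) * A (f k) (f (k + 1)) * d (f (k + 1)))).prod =
      s (f 0) * ((List.range (m + 1)).map (fun k => A (f k) (f (k + 1)))).prod *
        d (f (m + 1)) * e (m + 1) := by
  induction m with
  | zero => simp [h1]
  | succ m ih =>
    rw [List.range_succ, List.map_append, List.prod_append, List.map_append, List.prod_append,
      ih fun k hk hkm => hstep k hk (by omega), hstep (m + 1) (by omega) le_rfl]
    simp only [List.map_cons, List.map_nil, List.prod_singleton]
    have h := he (m + 1)
    have h2 := he (m + 1 + 1)
    rw [hstep (m + 1) (by omega) le_rfl] at h2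
    generalize e (m + 1) = E at *
    generalize ((List.range (m + 1)).map (fun k => A (f k) (f (k + 1)))).prod = P
    generalize hq : d (f (m + 1)) * s (f (m + 1)) = q at *
    calc s (f 0) * P * d (f (m + 1)) * E *
          (s (f (m + 1)) * A (f (m + 1)) (f (m + 1 + 1)) * d (f (m + 1 + 1)))
        = s (f 0) * P * (E * (d (f (m + 1)) * s (f (m + 1))) *
          (A (f (m + 1)) (f (m + 1 + 1)) * d (f (m + 1 + 1)))) := by simp only [mul_assoc, h]
      _ = s (f 0) * P * ((A (f (m + 1)) (f (m + 1 + 1)) * d (f (m + 1 + 1))) *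
          (E * (d (f (m + 1)) * s (f (m + 1))))) := by rw [hq, h2]
      _ = _ := by rw [hq]; simp only [mul_assoc]

open Classical in
/-- Scaling rows by `s` and columns by `d`, where only the index `i` is scaled nontrivially. The
factor `c` appears when `i` is an inner vertex of the cycle read off from `l`. -/
lemma cycProd_scale {n : ℕ} {R : Type*} [Ring R] (A B : Matrix (Fin n) (Fin n) R)
    (s d : Fin n → R) (hB : ∀ j k, B j k = s j * A j k * d k) (i : Fin n)
    (hs : ∀ j, j ≠ i → s j = 1) (hd : ∀ j, j ≠ i → d j = 1)
    (c : R) (hc : ∀ r, c * r = r * c) (σ : Equiv.Perm (Fin n)) (l : Fin n)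
    (hcyc : σ.SameCycle l i → i ≠ l → d i * s i = c) :
    cycProd B σ l = s l * cycProd A σ l * d l *
      (if σ.SameCycle l i ∧ i ≠ l then c else 1) := by
  obtain ⟨m, hm, hmn, hper, hmin⟩ := exists_period σ l
  have hlist := cycleList_eq hm hmn hper hmin
  obtain ⟨m, rfl⟩ : ∃ m', m = m' + 1 := ⟨m - 1, by omega⟩
  have hE : (σ.SameCycle l i ∧ i ≠ l) ↔ ∃ j, 1 ≤ j ∧ j < m + 1 ∧ (σ ^ j) l = i := by
    rw [← mem_cycleList, hlist]
    simp only [List.mem_map, List.mem_range]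
    constructor
    · rintro ⟨⟨k, hk, rfl⟩, h⟩
      refine ⟨k, Nat.one_le_iff_ne_zero.2 ?_, hk, rfl⟩
      rintro rfl
      exact h rfl
    · rintro ⟨k, hk, hkm, rfl⟩
      exact ⟨⟨k, hkm, rfl⟩, hmin k hk hkm⟩
  have key := prod_path A s d (fun k => (σ ^ k) l)
    (fun k => if ∃ j, 1 ≤ j ∧ j < k ∧ (σ ^ j) l = i then c else 1)
    (by intro k r; split_ifs <;> simp [hc])
    (if_neg (by rintro ⟨j, h1, h2, -⟩; omega)) m ?_
  · simp only [hper, pow_zero, Equiv.Perm.one_apply] at key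
    unfold cycProd
    rw [hlist]
    simp only [hE, List.map_map, Function.comp_def, hB]
    simp only [pow_succ', Equiv.Perm.mul_apply] at key ⊢
    exact key
  · intro k hk hkm
    by_cases hki : (σ ^ k) l = i
    · have hnot : ¬ ∃ j, 1 ≤ j ∧ j < k ∧ (σ ^ j) l = i := by
        rintro ⟨j, hj, hjk, hji⟩
        refine hmin (k - j) (by omega) (by omega) ((σ ^ j).injective ?_)
        rw [← Equiv.Perm.mul_apply, ← pow_add, hji, ← hki]
        congr 2
        omega
      have hi := hE.2 ⟨k, hk, by omega, hki⟩
      rw [if_pos ⟨k, hk, by omega, hki⟩, if_neg hnot, hki, hcyc hi.1 hi.2, one_mul]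
    · rw [hs _ hki, hd _ hki, mul_one, mul_one]
      congr 1
      apply propext
      constructor
      · rintro ⟨j, hj, hjk, hji⟩
        refine ⟨j, hj, lt_of_le_of_ne (by omega) ?_, hji⟩
        rintro rfl
        exact hki hji
      · rintro ⟨j, hj, hjk, hji⟩
        exact ⟨j, hj, by omega, hji⟩

/-! ### Conjugation of dual quaternions -/

lemma dq_star_fst (q : DualQuaternion) : (star q).fst = star q.fst := rfl

lemma dq_star_snd (q : DualQuaternion) : (star q).snd = star q.snd := rfl

lemma dq_star_one : star (1 : DualQuaternion) = 1 := by
  refine TrivSqZeroExt.ext ?_ ?_ <;> simp [dq_star_fst, dq_star_snd]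

lemma dq_star_mul (p q : DualQuaternion) : star (p * q) = star q * star p := by
  refine TrivSqZeroExt.ext ?_ ?_
  · simp [dq_star_fst]
  · simp [dq_star_fst, dq_star_snd, add_comm]

lemma dq_star_prod (L : List DualQuaternion) : star L.prod = (L.map star).reverse.prod := by
  induction L with
  | nil => simp [dq_star_one]
  | cons a L ih => simp [dq_star_mul, ih]

lemma dq_add_star_central (x y : DualQuaternion) : (x + star x) * y = y * (x + star x) := by
  refine TrivSqZeroExt.ext ?_ ?_
  · simp only [TrivSqZeroExt.fst_mul, TrivSqZeroExt.fst_add, dq_star_fst,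
      Quaternion.self_add_star']
    exact Quaternion.coe_commutes _ _
  · simp only [TrivSqZeroExt.snd_mul, TrivSqZeroExt.fst_add, TrivSqZeroExt.snd_add, dq_star_fst,
      dq_star_snd, Quaternion.self_add_star', smul_eq_mul, MulOpposite.smul_eq_mul_unop,
      MulOpposite.unop_op]
    rw [Quaternion.coe_commutes, Quaternion.coe_commutes, add_comm]

lemma dq_star_comm_self (x : DualQuaternion) : star x * x = x * star x := by
  have h := dq_add_star_central x x
  rw [add_mul, mul_add] at h
  exact add_left_cancel h

lemma dq_norm_central (x y : DualQuaternion) : star x * x * y = y * (star x * x) := by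
  have h1 : ∀ q : ℍ[ℝ], star q * q = ((Quaternion.normSq q : ℝ) : ℍ[ℝ]) :=
    fun q => Quaternion.star_mul_self q
  have h2 : ∀ p q : ℍ[ℝ], star p * q + star q * p = ((2 * (star p * q).re : ℝ) : ℍ[ℝ]) := by
    intro p q
    rw [← Quaternion.self_add_star', star_mul, star_star]
  refine TrivSqZeroExt.ext ?_ ?_
  · simp only [TrivSqZeroExt.fst_mul, dq_star_fst, h1]
    exact Quaternion.coe_commutes _ _
  · simp only [TrivSqZeroExt.snd_mul, TrivSqZeroExt.fst_mul, dq_star_fst,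
      dq_star_snd, smul_eq_mul, MulOpposite.smul_eq_mul_unop,
      MulOpposite.unop_op, h1, h2]
    rw [Quaternion.coe_commutes, Quaternion.coe_commutes, add_comm]

/-! ### Pairing a permutation with its flip -/

/-- For a Hermitian matrix, reversing a cycle conjugates the cycle product. -/
lemma cycProd_flipCycle_of_mem {n : ℕ} {A : Matrix (Fin n) (Fin n) DualQuaternion}
    (hA : Aᴴ = A) {σ : Equiv.Perm (Fin n)} {i l : Fin n} (h : σ.SameCycle i l) :
    cycProd A (flipCycle i σ) l = star (cycProd A σ l) := by
  have hA' : ∀ j k, star (A j k) = A k j := fun j k => by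
    conv_rhs => rw [← hA]
    rfl
  obtain ⟨m, hm, hmn, hper, hmin⟩ := exists_period σ l
  have hlist := cycleList_eq hm hmn hper hmin
  have hback : ∀ k ≤ m, (σ⁻¹ ^ k) l = (σ ^ (m - k)) l := by
    intro k hk
    rw [inv_pow, Equiv.Perm.inv_eq_iff_eq, ← Equiv.Perm.mul_apply, ← pow_add,
      Nat.add_sub_cancel' hk, hper]
  have hlist' : cycleList (flipCycle i σ) l = (List.range m).map (fun k => (σ⁻¹ ^ k) l) := by
    rw [cycleList_congr (flipCycle_pow_of_mem h), cycleList_eq hm hmn]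
    · rw [hback m le_rfl, Nat.sub_self]; rfl
    · intro k hk hkm
      rw [hback k hkm.le]
      exact hmin _ (by omega) (by omega)
  unfold cycProd
  rw [dq_star_prod, hlist, hlist']
  congr 1
  apply List.ext_getElem
  · simp
  · intro k hk _
    have hkm : k < m := by simpa using hk
    have hmem : σ.SameCycle i ((σ⁻¹ ^ k) l) := h.trans ⟨-k, by simp⟩
    simp only [List.getElem_map, List.getElem_reverse, List.getElem_range, List.length_map,
      List.length_range, hA', flipCycle_apply_of_mem hmem]
    rw [← Equiv.Perm.mul_apply, ← Equiv.Perm.mul_apply, ← pow_succ', ← pow_succ',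
      hback k hkm.le, hback (k + 1) hkm, show m - 1 - k + 1 = m - k by omega,
      show m - 1 - k = m - (k + 1) by omega]

/-- Common form of the three identities: row `i` of the Hermitian matrix `A` is multiplied by
`s i` on the left and column `i` by `d i` on the right. Either `i` is the last index, so that it
leads the first cycle of every permutation, or the scalar `s i * d i = d i * s i` is central. -/
theorem Cdet_scale {n : ℕ} {A B : Matrix (Fin (n + 1)) (Fin (n + 1)) DualQuaternion}
    (hA : Aᴴ = A) (s d : Fin (n + 1) → DualQuaternion)
    (hB : ∀ j k, B j k = s j * A j k * d k) (i : Fin (n + 1))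
    (hs : ∀ j, j ≠ i → s j = 1) (hd : ∀ j, j ≠ i → d j = 1)
    (hcase : i = Fin.last n ∨
      ((∀ r, s i * d i * r = r * (s i * d i)) ∧ d i * s i = s i * d i)) :
    Cdet B = s i * d i * Cdet A := by
  classical
  have hpair : ∀ σ, chenTerm B σ + chenTerm B (flipCycle i σ) =
      s i * d i * (chenTerm A σ + chenTerm A (flipCycle i σ)) := by
    intro σ
    obtain ⟨l, hl, hil⟩ := exists_leader σ i
    -- If `i` is the leader, the scalars stand at both ends of its cycle product; otherwise they
    -- meet inside it as the central factor `d i * s i`, written here at the right end.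
    obtain ⟨a, b, hab, hval⟩ : ∃ a b, a * b = s i * d i ∧
        ∀ τ : Equiv.Perm (Fin (n + 1)), τ.SameCycle i l →
          cycProd B τ l = a * cycProd A τ l * b := by
      by_cases h : i = l
      · subst h
        refine ⟨s i, d i, rfl, fun τ _ => ?_⟩
        rw [cycProd_scale A B s d hB i hs hd 1 (by simp) τ i (fun _ h => absurd rfl h)]
        simp
      · obtain ⟨hcen, hcomm⟩ := hcase.resolve_left (by
          rintro rfl
          exact h (le_antisymm (mem_chenLeaders.1 hl _ hil.symm) (Fin.le_last l)))
        refine ⟨1, s i * d i, one_mul _, fun τ hτ => ?_⟩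
        rw [cycProd_scale A B s d hB i hs hd (s i * d i) hcen τ l (fun _ _ => hcomm),
          hs l (Ne.symm h), hd l (Ne.symm h), if_pos ⟨hτ.symm, h⟩, mul_one]
    obtain ⟨L₁, L₂, hL⟩ := List.append_of_mem hl
    have hnodup := chenLeaders_nodup σ
    have hother : ∀ l' ∈ L₁ ++ L₂, ¬ σ.SameCycle i l' := by
      intro l' hl' hil'
      have hmem : l' ∈ chenLeaders σ := by
        rw [hL]; simp only [List.mem_append, List.mem_cons] at hl' ⊢; tauto
      have : l' = l := le_antisymm
        (mem_chenLeaders.1 hl _ (hil.symm.trans hil'))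
        (mem_chenLeaders.1 hmem _ (hil'.symm.trans hil))
      subst this
      rw [hL, List.nodup_middle] at hnodup
      exact (List.nodup_cons.1 hnodup).1 hl'
    have hBA : ∀ l' ∈ L₁ ++ L₂, cycProd B σ l' = cycProd A σ l' := by
      intro l' hl'
      apply cycProd_congr
      intro j hj
      have hji : j ≠ i := by
        rintro rfl
        exact hother l' hl' hj.symm
      have hσji : σ j ≠ i := by
        rintro rfl
        exact hother l' hl'
          ((Equiv.Perm.sameCycle_apply_left.2 (Equiv.Perm.SameCycle.refl σ j)).trans hj.symm)
      rw [hB, hs j hji, hd _ hσji, one_mul, mul_one]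
    have hfl : ∀ (M : Matrix (Fin (n + 1)) (Fin (n + 1)) DualQuaternion), ∀ l' ∈ L₁ ++ L₂,
        cycProd M (flipCycle i σ) l' = cycProd M σ l' :=
      fun M l' hl' => cycProd_flipCycle_of_not_mem M (hother l' hl')
    have hsplit : ∀ (M : Matrix (Fin (n + 1)) (Fin (n + 1)) DualQuaternion)
        (τ : Equiv.Perm (Fin (n + 1))),
        (∀ l' ∈ L₁ ++ L₂, cycProd M τ l' = cycProd A σ l') →
        ((L₁ ++ l :: L₂).map (cycProd M τ)).prod =
          (L₁.map (cycProd A σ)).prod * (cycProd M τ l * (L₂.map (cycProd A σ)).prod) := by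
      intro M τ h
      rw [List.map_append, List.prod_append, List.map_cons, List.prod_cons,
        List.map_congr_left fun j hj => h j (List.mem_append_left _ hj),
        List.map_congr_left fun j hj => h j (List.mem_append_right _ hj)]
    -- `s i * d i` moves past the cycles in front: it is central, or there are none of them.
    have hfront : ∀ r, (L₁.map (cycProd A σ)).prod * (s i * d i * r) =
        s i * d i * ((L₁.map (cycProd A σ)).prod * r) := by
      intro r
      rcases hcase with rfl | ⟨hcen, -⟩
      · have : L₁ = [] := by
          obtain ⟨L, hL'⟩ := chenLeaders_eq_last_cons σ
          rcases L₁ with _ | ⟨x, L₁⟩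
          · rfl
          · rw [hL'] at hL
            obtain ⟨rfl, -⟩ := List.cons.inj hL
            exact absurd (Equiv.Perm.SameCycle.refl σ _) (hother (Fin.last n) (by simp))
        simp [this]
      · rw [← mul_assoc, ← hcen, mul_assoc]
    unfold chenTerm
    rw [chenLeaders_flipCycle, hL, hsplit B σ hBA, hsplit A σ (fun _ _ => rfl),
      hsplit B _ (fun l' hl' => (hfl B l' hl').trans (hBA l' hl')), hsplit A _ (hfl A),
      hval σ hil, hval _ (flipCycle_sameCycle.2 hil), cycProd_flipCycle_of_mem hA hil]
    have hsum : ∀ r, a * cycProd A σ l * b * r + a * star (cycProd A σ l) * b * r =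
        s i * d i * ((cycProd A σ l + star (cycProd A σ l)) * r) := by
      intro r
      rw [← hab, ← add_mul, ← add_mul, ← mul_add, mul_assoc a _ b, dq_add_star_central]
      simp only [mul_assoc]
    have hsgn : ∀ (k : ℕ) (r : DualQuaternion), (-1) ^ k * r = r * (-1) ^ k := fun k r =>
      ((Commute.neg_one_left r).pow_left k).eq
    rw [← mul_add, ← mul_add, ← mul_add, ← mul_add, hsum, hfront, hsgn, hsgn, ← add_mul, mul_assoc]
  have hflip : ∀ M : Matrix (Fin (n + 1)) (Fin (n + 1)) DualQuaternion,
      ∑ σ, chenTerm M (flipCycle i σ) = ∑ σ, chenTerm M σ := fun M =>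
    Equiv.sum_comp (flipCycle_involutive i).toPerm (chenTerm M)
  have htwo : (2 : ℝ) • Cdet B = (2 : ℝ) • (s i * d i * Cdet A) := by
    rw [two_smul, two_smul, ← mul_add, Cdet_eq_sum_chenTerm, Cdet_eq_sum_chenTerm]
    nth_rw 2 [← hflip B]
    nth_rw 2 [← hflip A]
    rw [← Finset.sum_add_distrib, ← Finset.sum_add_distrib, Finset.mul_sum]
    exact Finset.sum_congr rfl fun σ _ => hpair σ
  exact smul_right_injective _ (two_ne_zero' ℝ) htwo

lemma mulMatrix_eq_diagonal {n : ℕ} (i : Fin n) (α : DualQuaternion) :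
    mulMatrix i α = Matrix.diagonal (fun k => if k = i then α else 1) := by
  ext1 k l
  simp [mulMatrix, Matrix.diagonal_apply]

lemma conjTranspose_mulMatrix {n : ℕ} (i : Fin n) (α : DualQuaternion) :
    (mulMatrix i α)ᴴ = mulMatrix i (star α) := by
  ext1 k l
  have h0 : star (0 : DualQuaternion) = 0 := by
    refine TrivSqZeroExt.ext ?_ ?_ <;> simp [dq_star_fst, dq_star_snd]
  simp only [Matrix.conjTranspose_apply, mulMatrix, Matrix.of_apply]
  by_cases h : k = l
  · subst h
    by_cases h' : k = i <;> simp [h', dq_star_one]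
  · simp [h, Ne.symm h, h0]

/-- For a dual quaternion Hermitian matrix `A` (of size `(n+1) × (n+1)`, with last index `n`):
`Cdet(P_{n;α} A) = α Cdet(A)`, `Cdet(A P_{n;α}) = α Cdet(A)`, and
`Cdet(P_{i;α}* A P_{i;α}) = α* α Cdet(A)` for every index `i`. -/
theorem statement6 {n : ℕ} (A : Matrix (Fin (n + 1)) (Fin (n + 1)) DualQuaternion)
    (hA : Aᴴ = A) (α : DualQuaternion) :
    Cdet (mulMatrix (Fin.last n) α * A) = α * Cdet A ∧
    Cdet (A * mulMatrix (Fin.last n) α) = α * Cdet A ∧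
    ∀ i : Fin (n + 1),
      Cdet ((mulMatrix i α)ᴴ * A * mulMatrix i α) = star α * α * Cdet A := by
  refine ⟨?_, ?_, fun i => ?_⟩
  · simpa using Cdet_scale (B := mulMatrix (Fin.last n) α * A) hA
      (fun k => if k = Fin.last n then α else 1) (fun _ => 1)
      (fun j k => by rw [mulMatrix_eq_diagonal, Matrix.diagonal_mul, mul_one]) (Fin.last n)
      (fun j hj => if_neg hj) (fun _ _ => rfl) (Or.inl rfl)
  · simpa using Cdet_scale (B := A * mulMatrix (Fin.last n) α) hA
      (fun _ => 1) (fun k => if k = Fin.last n then α else 1)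
      (fun j k => by rw [mulMatrix_eq_diagonal, Matrix.mul_diagonal, one_mul]) (Fin.last n)
      (fun _ _ => rfl) (fun j hj => if_neg hj) (Or.inl rfl)
  · have hc := dq_norm_central α
    have hs := dq_star_comm_self α
    simpa using Cdet_scale (B := (mulMatrix i α)ᴴ * A * mulMatrix i α) hA
      (fun k => if k = i then star α else 1) (fun k => if k = i then α else 1)
      (fun j k => by
        rw [conjTranspose_mulMatrix, mulMatrix_eq_diagonal, mulMatrix_eq_diagonal,
          Matrix.mul_diagonal, Matrix.diagonal_mul]) i
      (fun j hj => if_neg hj) (fun j hj => if_neg hj)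
      (Or.inr ⟨by simpa using hc, by simpa using hs.symm⟩)

end DQPaper
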